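/- Let 0 < c, c₁, c₂ < 1 and A ∈ ℝ, let D > 0, and suppose f : ℝ → [0,∞) is measurable and for every ε > 0 there is a constant C_ε with f(t) ≤ C_ε(1+|t|)^ε for all t ∈ ℝ. Then for every ε > 0 there exist constants C > 0 and κ₀ ∈ (0,1) such that: for every κ ∈ (0, κ₀) with the property that |∫_{−T}^{T} f(t) dt − T(log T + A)| ≤ D·T^{1−c} for all T with κ^{−(1−c₁)} ≤ T ≤ κ^{−(1+c₂)}, one has |∫_{−∞}^{∞} (sin(κu)/u)² f(u) du − (π/2)·κ·(log(1/κ) + B)| ≤ C·(κ^{1+c} + κ^{1+c₁−ε} + κ^{1+c₂−ε}), where B = A + 2 − γ₀ − log 2. -/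

import Mathlib

open Real MeasureTheory
open Set Filter Asymptotics Topology

/-!
Fold `f` onto the half-line: `f u + f (-u)` is compared with `log u + (A + 1)`, the derivative of
`T (log T + A)`. The comparison density produces the main term exactly, since it reduces by scaling
to `∫ sinc² v log v`. Writing `(1 - γ₀ - log v) / v²` as the Laplace transform of `t log t` and
exchanging integrals turns the latter into `∫ log t / (t² + 4)`.

The folded error has primitive `O(T ^ (1 - c))` for `U ≤ T ≤ V`, where `U = κ ^ (-(1 - c₁))` and
`V = κ ^ (-(1 + c₂))`. On `[U, V]` integrate by parts and bound the derivative of the kernel by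
`κ² / u` below `κ⁻¹` and by `κ / u²` above it. On `[0, U]` and `[V, ∞)` the growth bound on `f`
together with kernel `≤ min (κ², u⁻²)` is enough.
-/

/-! ### The integrals of `sinc²` and `sinc² log` -/

lemma mellin_ofReal_comp (h : ℝ → ℝ) (x : ℝ) :
    mellin (fun t ↦ (h t : ℂ)) x = ((∫ t in Ioi (0 : ℝ), t ^ (x - 1) * h t : ℝ) : ℂ) := by
  rw [mellin, ← integral_complex_ofReal]
  refine setIntegral_congr_fun measurableSet_Ioi fun t ht ↦ ?_
  have : (t : ℂ) ^ ((x : ℂ) - 1) = ((t ^ (x - 1) : ℝ) : ℂ) := by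
    rw [Complex.ofReal_cpow (le_of_lt ht)]
    push_cast
    rfl
  simp only [smul_eq_mul, this, Complex.ofReal_mul]

lemma hasDerivAt_integral_rpow_mul_exp_neg_mul {a r : ℝ} (ha : 0 < a) (hr : 0 < r) :
    HasDerivAt (fun x ↦ ∫ t in Ioi (0 : ℝ), t ^ (x - 1) * rexp (-(r * t)))
      (∫ t in Ioi (0 : ℝ), t ^ (a - 1) * (log t * rexp (-(r * t)))) a := by
  let e : ℝ → ℂ := fun t ↦ (rexp (-(r * t)) : ℂ)
  have he : Continuous e := by fun_prop
  have h_top : e =O[atTop] fun t : ℝ ↦ t ^ (-(a + 1)) := by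
    refine Complex.isBigO_ofReal_left.2 ?_
    simpa only [neg_mul] using (isLittleO_exp_neg_mul_rpow_atTop hr (-(a + 1))).isBigO
  have h_bot : e =O[𝓝[>] 0] fun t : ℝ ↦ t ^ (-0 : ℝ) := by
    simpa only [neg_zero, rpow_zero] using
      ((he.tendsto 0).isBigO_one ℝ).mono nhdsWithin_le_nhds
  have h_deriv := (mellin_hasDerivAt_of_isBigO_rpow (s := (a : ℂ))
    (he.locallyIntegrable.locallyIntegrableOn _) h_top (by simp) h_bot (by simpa)).2
  have h_log : (fun t ↦ log t • e t) = fun t ↦ ((log t * rexp (-(r * t)) : ℝ) : ℂ) := by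
    simp [e]
  rw [h_log, mellin_ofReal_comp] at h_deriv
  simpa only [e, mellin_ofReal_comp, Complex.ofReal_re] using h_deriv.real_of_complex

lemma integral_rpow_mul_log_mul_exp_neg_mul_Ioi {a r : ℝ} (ha : 0 < a) (hr : 0 < r) :
    ∫ t in Ioi (0 : ℝ), t ^ (a - 1) * (log t * rexp (-(r * t))) =
      (1 / r) ^ a * (deriv Gamma a - log r * Gamma a) := by
  have h_gamma : HasDerivAt Gamma (deriv Gamma a) a :=
    (differentiableAt_Gamma fun m ↦ by linarith [m.cast_nonneg (α := ℝ)]).hasDerivAt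
  have h_closed := (hasStrictDerivAt_const_rpow (one_div_pos.2 hr) a).hasDerivAt.mul h_gamma
  have h_eq : (fun x ↦ ∫ t in Ioi (0 : ℝ), t ^ (x - 1) * rexp (-(r * t)))
      =ᶠ[𝓝 a] fun x ↦ (1 / r) ^ x * Gamma x := by
    filter_upwards [lt_mem_nhds ha] with x hx using integral_rpow_mul_exp_neg_mul_Ioi hx hr
  rw [((hasDerivAt_integral_rpow_mul_exp_neg_mul ha hr).congr_of_eventuallyEq h_eq.symm).unique
    h_closed, one_div, log_inv]
  ring

lemma integral_mul_exp_neg_mul_Ioi {r : ℝ} (hr : 0 < r) :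
    ∫ t in Ioi (0 : ℝ), t * rexp (-(r * t)) = 1 / r ^ 2 := by
  have h := integral_rpow_mul_exp_neg_mul_Ioi two_pos hr
  norm_num at h
  simpa using h

lemma integral_mul_exp_neg_mul_mul_log_Ioi {r : ℝ} (hr : 0 < r) :
    ∫ t in Ioi (0 : ℝ), t * rexp (-(r * t)) * log t =
      (1 - eulerMascheroniConstant - log r) / r ^ 2 := by
  have h_deriv : deriv Gamma 2 = 1 - eulerMascheroniConstant := by
    have h := (hasDerivAt_Gamma_nat 1).deriv
    norm_num at h
    linarith
  have h := integral_rpow_mul_log_mul_exp_neg_mul_Ioi two_pos hr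
  norm_num [h_deriv] at h
  convert h using 1
  · refine integral_congr_ae (.of_forall fun t ↦ ?_)
    ring
  · ring

lemma integral_exp_neg_mul_mul_cos_Ioi {t : ℝ} (ht : 0 < t) (b : ℝ) :
    IntegrableOn (fun v ↦ rexp (-(t * v)) * cos (b * v)) (Ioi 0) ∧
      ∫ v in Ioi (0 : ℝ), rexp (-(t * v)) * cos (b * v) = t / (t ^ 2 + b ^ 2) := by
  have hre : (-t + b * Complex.I : ℂ).re < 0 := by simpa
  have h_re (v : ℝ) : rexp (-(t * v)) * cos (b * v) =
      RCLike.re (Complex.exp ((-t + b * Complex.I) * v)) := by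
    simp [Complex.exp_re]
  have h_int := integrableOn_exp_mul_complex_Ioi hre 0
  simp_rw [h_re]
  refine ⟨h_int.re, ?_⟩
  rw [integral_re h_int, integral_exp_mul_complex_Ioi hre]
  have h_norm : (-t + b * Complex.I : ℂ).normSq = t ^ 2 + b ^ 2 := by
    simp [Complex.normSq_apply, sq]
  simp [Complex.div_re, h_norm]

lemma integral_exp_neg_mul_mul_sin_sq_Ioi {t : ℝ} (ht : 0 < t) :
    IntegrableOn (fun v ↦ rexp (-(t * v)) * sin v ^ 2) (Ioi 0) ∧
      ∫ v in Ioi (0 : ℝ), rexp (-(t * v)) * sin v ^ 2 = 2 / (t * (t ^ 2 + 4)) := by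
  have h_half (v : ℝ) : rexp (-(t * v)) * sin v ^ 2 =
      2⁻¹ * (rexp (-(t * v)) * cos (0 * v) - rexp (-(t * v)) * cos (2 * v)) := by
    rw [sin_sq_eq_half_sub, zero_mul, cos_zero]
    ring
  obtain ⟨h_int₀, h_eq₀⟩ := integral_exp_neg_mul_mul_cos_Ioi ht 0
  obtain ⟨h_int₂, h_eq₂⟩ := integral_exp_neg_mul_mul_cos_Ioi ht 2
  simp_rw [h_half]
  refine ⟨(h_int₀.sub h_int₂).const_mul _, ?_⟩
  rw [integral_const_mul, integral_sub h_int₀ h_int₂, h_eq₀, h_eq₂]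
  field_simp
  ring

section SinSq

variable {w : ℝ → ℝ}

lemma integrable_sin_sq_mul_laplace
    (h_int : IntegrableOn (fun t ↦ 2 / (t ^ 2 + 4) * w t) (Ioi 0)) :
    Integrable (fun p : ℝ × ℝ ↦ sin p.1 ^ 2 * (p.2 * rexp (-(p.1 * p.2)) * w p.2))
      ((volume.restrict (Ioi 0)).prod (volume.restrict (Ioi 0))) := by
  have h_rw (v t : ℝ) : sin v ^ 2 * (t * rexp (-(v * t)) * w t) =
      t * w t * (rexp (-(t * v)) * sin v ^ 2) := by
    rw [mul_comm v t]
    ring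
  have hw : AEStronglyMeasurable w (volume.restrict (Ioi 0)) := by
    refine ((by fun_prop : Continuous fun t : ℝ ↦ (t ^ 2 + 4) / 2).aestronglyMeasurable.mul
      h_int.aestronglyMeasurable).congr (.of_forall fun t ↦ ?_)
    simp only [Pi.mul_apply]
    field_simp
  have h_meas : AEStronglyMeasurable
      (fun p : ℝ × ℝ ↦ sin p.1 ^ 2 * (p.2 * rexp (-(p.1 * p.2)) * w p.2))
      ((volume.restrict (Ioi 0)).prod (volume.restrict (Ioi 0))) :=
    (by fun_prop : Continuous fun p : ℝ × ℝ ↦ sin p.1 ^ 2).aestronglyMeasurable.mul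
      ((by fun_prop : Continuous fun p : ℝ × ℝ ↦ p.2 * rexp (-(p.1 * p.2))).aestronglyMeasurable.mul
        hw.comp_snd)
  simp_rw [h_rw] at h_meas ⊢
  refine (integrable_prod_iff' h_meas).2 ⟨?_, h_int.norm.congr ?_⟩
  · filter_upwards [ae_restrict_mem measurableSet_Ioi] with t (ht : 0 < t)
    exact (integral_exp_neg_mul_mul_sin_sq_Ioi ht).1.const_mul _
  · filter_upwards [ae_restrict_mem measurableSet_Ioi] with t (ht : 0 < t)
    have h_norm (v : ℝ) : ‖t * w t * (rexp (-(t * v)) * sin v ^ 2)‖ =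
        t * |w t| * (rexp (-(t * v)) * sin v ^ 2) := by
      rw [norm_mul, norm_mul, norm_of_nonneg ht.le, norm_eq_abs,
        norm_of_nonneg (mul_nonneg (exp_nonneg _) (sq_nonneg _))]
    simp_rw [h_norm]
    rw [integral_const_mul, (integral_exp_neg_mul_mul_sin_sq_Ioi ht).2, norm_mul,
      norm_of_nonneg (by positivity), norm_eq_abs]
    field_simp

lemma integral_sin_sq_mul_laplace
    (h_int : IntegrableOn (fun t ↦ 2 / (t ^ 2 + 4) * w t) (Ioi 0)) :
    IntegrableOn (fun v ↦ sin v ^ 2 * ∫ t in Ioi (0 : ℝ), t * rexp (-(v * t)) * w t) (Ioi 0) ∧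
      ∫ v in Ioi (0 : ℝ), sin v ^ 2 * ∫ t in Ioi (0 : ℝ), t * rexp (-(v * t)) * w t =
        ∫ t in Ioi (0 : ℝ), 2 / (t ^ 2 + 4) * w t := by
  have h_prod := integrable_sin_sq_mul_laplace h_int
  refine ⟨by simpa only [IntegrableOn, integral_const_mul] using h_prod.integral_prod_left, ?_⟩
  simp_rw [← integral_const_mul]
  rw [integral_integral_swap h_prod]
  refine setIntegral_congr_fun measurableSet_Ioi fun t (ht : 0 < t) ↦ ?_
  calc ∫ v in Ioi (0 : ℝ), sin v ^ 2 * (t * rexp (-(v * t)) * w t)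
      = ∫ v in Ioi (0 : ℝ), t * w t * (rexp (-(t * v)) * sin v ^ 2) := by
        refine integral_congr_ae (.of_forall fun v ↦ ?_)
        simp only [mul_comm v t]
        ring
    _ = 2 / (t ^ 2 + 4) * w t := by
        rw [integral_const_mul, (integral_exp_neg_mul_mul_sin_sq_Ioi ht).2]
        field_simp

end SinSq

lemma integrableOn_log_div_one_add_sq_Ioi :
    IntegrableOn (fun t ↦ log t / (1 + t ^ 2)) (Ioi 0) := by
  have h_cont : Continuous fun t : ℝ ↦ (1 + t ^ 2)⁻¹ := by
    fun_prop (disch := intros; positivity)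
  have h_top : (fun t : ℝ ↦ (1 + t ^ 2)⁻¹) =O[atTop] fun t ↦ t ^ (-2 : ℝ) := by
    refine .of_bound' ?_
    filter_upwards [eventually_gt_atTop 0] with t ht
    rw [norm_of_nonneg (by positivity), norm_of_nonneg (by positivity), rpow_neg ht.le, rpow_two]
    gcongr
    linarith
  have h_bot : (fun t : ℝ ↦ (1 + t ^ 2)⁻¹) =O[𝓝[>] 0] fun t ↦ t ^ (-0 : ℝ) := by
    simpa only [neg_zero, rpow_zero] using
      ((h_cont.tendsto 0).isBigO_one ℝ).mono nhdsWithin_le_nhds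
  have h_loc : LocallyIntegrableOn (fun t : ℝ ↦ log t • (1 + t ^ 2)⁻¹) (Ioi 0) :=
    ((continuousOn_log.mono fun t (ht : 0 < t) ↦ ht.ne').smul
      h_cont.continuousOn).locallyIntegrableOn measurableSet_Ioi
  have h_mellin := mellin_convergent_of_isBigO_scalar (s := 1) h_loc
    (isBigO_rpow_top_log_smul (by norm_num : (3 / 2 : ℝ) < 2) h_top) (by norm_num)
    (isBigO_rpow_zero_log_smul (by norm_num : (0 : ℝ) < 1 / 2) h_bot) (by norm_num)
  simpa [div_eq_mul_inv] using h_mellin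

lemma integral_log_div_one_add_sq_Ioi : ∫ t in Ioi (0 : ℝ), log t / (1 + t ^ 2) = 0 := by
  have h_inv := integral_comp_rpow_Ioi (fun t ↦ log t / (1 + t ^ 2)) (p := -1) (by norm_num)
  have h_odd : ∀ t ∈ Ioi (0 : ℝ), (|(-1 : ℝ)| * t ^ ((-1 : ℝ) - 1)) •
      (log (t ^ (-1 : ℝ)) / (1 + (t ^ (-1 : ℝ)) ^ 2)) = -(log t / (1 + t ^ 2)) := by
    intro t (ht : 0 < t)
    rw [show (-1 : ℝ) - 1 = -2 by norm_num, rpow_neg ht.le, rpow_neg_one, log_inv, rpow_two,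
      abs_neg, abs_one, smul_eq_mul]
    field_simp
    ring
  rw [setIntegral_congr_fun measurableSet_Ioi h_odd, integral_neg] at h_inv
  linarith

section Scaling

variable {a : ℝ}

lemma integral_inv_sq_add_sq_Ioi (ha : 0 < a) :
    IntegrableOn (fun t ↦ (t ^ 2 + a ^ 2)⁻¹) (Ioi 0) ∧
      ∫ t in Ioi (0 : ℝ), (t ^ 2 + a ^ 2)⁻¹ = π / (2 * a) := by
  have h_scale (t : ℝ) : ((a * t) ^ 2 + a ^ 2)⁻¹ = (a ^ 2)⁻¹ * (1 + t ^ 2)⁻¹ := by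
    rw [← mul_inv]
    ring
  constructor
  · rw [← mul_zero a, ← integrableOn_Ioi_comp_mul_left_iff _ _ ha]
    simp_rw [h_scale]
    exact integrable_inv_one_add_sq.integrableOn.const_mul _
  · have h := integral_comp_mul_left_Ioi (fun t ↦ (t ^ 2 + a ^ 2)⁻¹) 0 ha
    simp_rw [h_scale] at h
    rw [integral_const_mul, integral_Ioi_inv_one_add_sq, arctan_zero, sub_zero, mul_zero,
      smul_eq_mul, eq_inv_mul_iff_mul_eq₀ ha.ne'] at h
    rw [← h]
    field_simp

lemma integral_log_div_sq_add_sq_Ioi (ha : 0 < a) :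
    IntegrableOn (fun t ↦ log t / (t ^ 2 + a ^ 2)) (Ioi 0) ∧
      ∫ t in Ioi (0 : ℝ), log t / (t ^ 2 + a ^ 2) = π * log a / (2 * a) := by
  have h_scale : ∀ t ∈ Ioi (0 : ℝ), log (a * t) / ((a * t) ^ 2 + a ^ 2) =
      (a ^ 2)⁻¹ * (log a * (1 + t ^ 2)⁻¹ + log t / (1 + t ^ 2)) := by
    intro t (ht : 0 < t)
    rw [log_mul ha.ne' ht.ne']
    field_simp
    ring
  have h_int₀ : IntegrableOn (fun t ↦ log a * (1 + t ^ 2)⁻¹) (Ioi 0) :=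
    integrable_inv_one_add_sq.integrableOn.const_mul _
  constructor
  · rw [← mul_zero a, ← integrableOn_Ioi_comp_mul_left_iff _ _ ha,
      integrableOn_congr_fun h_scale measurableSet_Ioi]
    exact (h_int₀.add integrableOn_log_div_one_add_sq_Ioi).const_mul _
  · have h := integral_comp_mul_left_Ioi (fun t ↦ log t / (t ^ 2 + a ^ 2)) 0 ha
    rw [setIntegral_congr_fun measurableSet_Ioi h_scale, integral_const_mul,
      integral_add h_int₀ integrableOn_log_div_one_add_sq_Ioi, integral_const_mul,
      integral_Ioi_inv_one_add_sq, arctan_zero, sub_zero, integral_log_div_one_add_sq_Ioi,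
      mul_zero, smul_eq_mul, eq_inv_mul_iff_mul_eq₀ ha.ne'] at h
    rw [← h]
    field_simp
    ring

end Scaling

lemma integral_sinc_sq_Ioi :
    IntegrableOn (fun v ↦ sinc v ^ 2) (Ioi 0) ∧ ∫ v in Ioi (0 : ℝ), sinc v ^ 2 = π / 2 := by
  obtain ⟨h_int, h_eq⟩ := integral_inv_sq_add_sq_Ioi two_pos
  have h_weight (t : ℝ) : 2 / (t ^ 2 + 4) * 1 = 2 * (t ^ 2 + 2 ^ 2)⁻¹ := by
    norm_num [div_eq_mul_inv]
  have h_fubini := integral_sin_sq_mul_laplace (w := fun _ ↦ 1)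
    (by simpa only [IntegrableOn, h_weight] using h_int.const_mul 2)
  have h_sinc : ∀ v ∈ Ioi (0 : ℝ),
      sin v ^ 2 * ∫ t in Ioi (0 : ℝ), t * rexp (-(v * t)) * 1 = sinc v ^ 2 := by
    intro v (hv : 0 < v)
    simp_rw [mul_one]
    rw [integral_mul_exp_neg_mul_Ioi hv, sinc_of_ne_zero hv.ne']
    ring
  simp_rw [h_weight] at h_fubini
  rw [integrableOn_congr_fun h_sinc measurableSet_Ioi,
    setIntegral_congr_fun measurableSet_Ioi h_sinc, integral_const_mul, h_eq] at h_fubini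
  refine ⟨h_fubini.1, h_fubini.2.trans ?_⟩
  ring

lemma integral_sinc_sq_mul_log_Ioi :
    IntegrableOn (fun v ↦ sinc v ^ 2 * log v) (Ioi 0) ∧
      ∫ v in Ioi (0 : ℝ), sinc v ^ 2 * log v =
        π / 2 * (1 - eulerMascheroniConstant - log 2) := by
  obtain ⟨h_int, h_eq⟩ := integral_log_div_sq_add_sq_Ioi two_pos
  have h_weight (t : ℝ) : 2 / (t ^ 2 + 4) * log t = 2 * (log t / (t ^ 2 + 2 ^ 2)) := by
    ring
  obtain ⟨h_lap_int, h_lap⟩ := integral_sin_sq_mul_laplace (w := log)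
    (by simpa only [IntegrableOn, h_weight] using h_int.const_mul 2)
  obtain ⟨h_sinc_int, h_sinc⟩ := integral_sinc_sq_Ioi
  have h_rw : ∀ v ∈ Ioi (0 : ℝ), (1 - eulerMascheroniConstant) * sinc v ^ 2 -
      sin v ^ 2 * ∫ t in Ioi (0 : ℝ), t * rexp (-(v * t)) * log t = sinc v ^ 2 * log v := by
    intro v (hv : 0 < v)
    rw [integral_mul_exp_neg_mul_mul_log_Ioi hv, sinc_of_ne_zero hv.ne']
    ring
  rw [← integrableOn_congr_fun h_rw measurableSet_Ioi,
    ← setIntegral_congr_fun measurableSet_Ioi h_rw]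
  refine ⟨(h_sinc_int.const_mul _).sub h_lap_int, ?_⟩
  simp_rw [h_weight] at h_lap
  rw [integral_sub (h_sinc_int.const_mul _) h_lap_int, integral_const_mul, h_sinc, h_lap,
    integral_const_mul, h_eq]
  ring

/-! ### The Fejér kernel -/

/-- The (unnormalised) Fejér kernel `(sin (κ u) / u) ^ 2`. Writing it with `sinc` builds in the
continuous extension by `κ ^ 2` at `u = 0`. -/
noncomputable def fejerKernel (κ u : ℝ) : ℝ := (κ * sinc (κ * u)) ^ 2

lemma integral_fejerKernel_mul_log_add_Ioi {κ : ℝ} (hκ : 0 < κ) (a : ℝ) :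
    IntegrableOn (fun u ↦ fejerKernel κ u * (log u + a)) (Ioi 0) ∧
      ∫ u in Ioi (0 : ℝ), fejerKernel κ u * (log u + a) =
        π / 2 * κ * (log (1 / κ) + (a + 1 - eulerMascheroniConstant - log 2)) := by
  obtain ⟨h_int₀, h_eq₀⟩ := integral_sinc_sq_Ioi
  obtain ⟨h_int₁, h_eq₁⟩ := integral_sinc_sq_mul_log_Ioi
  let H : ℝ → ℝ := fun v ↦ sinc v ^ 2 * log v + (a - log κ) * sinc v ^ 2
  have hH : IntegrableOn H (Ioi 0) := h_int₁.add (h_int₀.const_mul _)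
  have h_scale : ∀ u ∈ Ioi (0 : ℝ), fejerKernel κ u * (log u + a) = κ ^ 2 * H (κ * u) := by
    intro u (hu : 0 < u)
    simp only [fejerKernel, H, log_mul hκ.ne' hu.ne']
    ring
  rw [integrableOn_congr_fun h_scale measurableSet_Ioi,
    setIntegral_congr_fun measurableSet_Ioi h_scale]
  refine ⟨((integrableOn_Ioi_comp_mul_left_iff H 0 hκ).2 (by rwa [mul_zero])).const_mul _, ?_⟩
  rw [integral_const_mul, integral_comp_mul_left_Ioi H 0 hκ, mul_zero,
    integral_add h_int₁ (h_int₀.const_mul _), integral_const_mul, h_eq₀, h_eq₁, smul_eq_mul,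
    one_div, log_inv]
  field_simp
  ring

section FejerKernel

variable {κ u : ℝ}

lemma continuous_fejerKernel (κ : ℝ) : Continuous (fejerKernel κ) :=
  (continuous_const.mul (continuous_sinc.comp (continuous_const_mul κ))).pow 2

lemma fejerKernel_neg (κ u : ℝ) : fejerKernel κ (-u) = fejerKernel κ u := by
  rw [fejerKernel, mul_neg, sinc_neg, fejerKernel]

lemma fejerKernel_nonneg (κ u : ℝ) : 0 ≤ fejerKernel κ u := sq_nonneg _

lemma fejerKernel_of_ne_zero (κ : ℝ) (hu : u ≠ 0) : fejerKernel κ u = (sin (κ * u) / u) ^ 2 := by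
  rcases eq_or_ne κ 0 with rfl | hκ
  · simp [fejerKernel]
  · rw [fejerKernel, sinc_of_ne_zero (mul_ne_zero hκ hu)]
    field_simp

lemma fejerKernel_eq_ite (κ u : ℝ) :
    fejerKernel κ u = if u = 0 then κ ^ 2 else (sin (κ * u) / u) ^ 2 := by
  split_ifs with hu
  · simp [fejerKernel, hu]
  · exact fejerKernel_of_ne_zero κ hu

lemma fejerKernel_le_sq (κ u : ℝ) : fejerKernel κ u ≤ κ ^ 2 := by
  rw [fejerKernel, mul_pow]
  exact mul_le_of_le_one_right (sq_nonneg κ) ((sq_le_one_iff_abs_le_one _).2 (abs_sinc_le_one _))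

lemma fejerKernel_le_rpow_neg_two (κ : ℝ) (hu : 0 < u) : fejerKernel κ u ≤ u ^ (-2 : ℝ) := by
  rw [fejerKernel_of_ne_zero κ hu.ne', rpow_neg hu.le, rpow_two, div_pow, ← one_div]
  gcongr
  exact sin_sq_le_one _

lemma fejerKernel_le_rpow_mul_rpow {c : ℝ} (hκ : 0 < κ) (hu : 0 < u) (hc : c ∈ Icc (-1) 1) :
    fejerKernel κ u ≤ κ ^ (1 + c) * u ^ (c - 1) := by
  have hp : 0 ≤ (1 + c) / 2 := by linarith [hc.1]
  have hq : 0 ≤ (1 - c) / 2 := by linarith [hc.2]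
  have hk := fejerKernel_nonneg κ u
  calc fejerKernel κ u = fejerKernel κ u ^ ((1 + c) / 2) * fejerKernel κ u ^ ((1 - c) / 2) := by
        rw [← rpow_add_of_nonneg hk hp hq]
        ring_nf
        rw [rpow_one]
    _ ≤ (κ ^ (2 : ℝ)) ^ ((1 + c) / 2) * (u ^ (-2 : ℝ)) ^ ((1 - c) / 2) := by
      gcongr
      · exact (fejerKernel_le_sq κ u).trans_eq (rpow_two κ).symm
      · exact fejerKernel_le_rpow_neg_two κ hu
    _ = κ ^ (1 + c) * u ^ (c - 1) := by
      rw [← rpow_mul hκ.le, ← rpow_mul hu.le]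
      ring_nf

lemma abs_fejerKernel_mul_le {c D y : ℝ} (hκ : 0 < κ) (hu : 0 < u) (hc : c ∈ Icc (-1) 1)
    (hy : |y| ≤ D * u ^ (1 - c)) : |fejerKernel κ u * y| ≤ D * κ ^ (1 + c) := by
  calc |fejerKernel κ u * y| ≤ κ ^ (1 + c) * u ^ (c - 1) * (D * u ^ (1 - c)) := by
        rw [abs_mul, abs_of_nonneg (fejerKernel_nonneg κ u)]
        gcongr
        exact fejerKernel_le_rpow_mul_rpow hκ hu hc
    _ = D * κ ^ (1 + c) * (u ^ (c - 1) * u ^ (1 - c)) := by ring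
    _ = D * κ ^ (1 + c) := by
      rw [← rpow_add hu, sub_add_sub_cancel, sub_self, rpow_zero, mul_one]

lemma hasDerivAt_fejerKernel (κ : ℝ) (hu : u ≠ 0) :
    HasDerivAt (fejerKernel κ)
      (2 * sin (κ * u) * (κ * u * cos (κ * u) - sin (κ * u)) / u ^ 3) u := by
  have h_eq : fejerKernel κ =ᶠ[𝓝 u] fun v ↦ (sin (κ * v) / v) ^ 2 := by
    filter_upwards [isOpen_ne.mem_nhds hu] with v hv using fejerKernel_of_ne_zero κ hv
  have h_quot := (((hasDerivAt_id u).const_mul κ).sin.div (hasDerivAt_id u) hu).pow 2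
  refine (h_quot.congr_of_eventuallyEq h_eq).congr_deriv ?_
  simp only [id_eq, mul_one, Nat.cast_ofNat, Pi.div_apply, Nat.add_one_sub_one, pow_one]
  field_simp

lemma abs_deriv_fejerKernel_le (hκ : 0 < κ) (hu : 0 < u) :
    |deriv (fejerKernel κ) u| ≤ 4 * κ * |sin (κ * u)| / u ^ 2 := by
  have hx : 0 < κ * u := mul_pos hκ hu
  have h_sin : |sin (κ * u)| ≤ κ * u := by
    simpa only [abs_of_pos hx] using abs_sin_le_abs (x := κ * u)
  have h_factor : |κ * u * cos (κ * u) - sin (κ * u)| ≤ 2 * (κ * u) := by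
    calc |κ * u * cos (κ * u) - sin (κ * u)| ≤ |κ * u * cos (κ * u)| + |sin (κ * u)| := abs_sub _ _
      _ ≤ κ * u * 1 + κ * u := by
        rw [abs_mul, abs_of_pos hx]
        gcongr
        exact abs_cos_le_one _
      _ = 2 * (κ * u) := by ring
  rw [(hasDerivAt_fejerKernel κ hu.ne').deriv, abs_div, abs_mul, abs_mul, abs_two,
    abs_of_pos (pow_pos hu 3)]
  calc 2 * |sin (κ * u)| * |κ * u * cos (κ * u) - sin (κ * u)| / u ^ 3
      ≤ 2 * |sin (κ * u)| * (2 * (κ * u)) / u ^ 3 := by gcongr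
    _ = 4 * κ * |sin (κ * u)| / u ^ 2 := by
      field_simp
      ring

lemma abs_deriv_fejerKernel_le_sq_mul_rpow (hκ : 0 < κ) (hu : 0 < u) :
    |deriv (fejerKernel κ) u| ≤ 4 * κ ^ 2 * u ^ (-1 : ℝ) := by
  have h_sin : |sin (κ * u)| ≤ κ * u := by
    simpa only [abs_of_pos (mul_pos hκ hu)] using abs_sin_le_abs (x := κ * u)
  calc |deriv (fejerKernel κ) u| ≤ 4 * κ * (κ * u) / u ^ 2 :=
        (abs_deriv_fejerKernel_le hκ hu).trans (by gcongr)
    _ = 4 * κ ^ 2 * u ^ (-1 : ℝ) := by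
      rw [rpow_neg_one]
      field_simp

lemma abs_deriv_fejerKernel_le_mul_rpow (hκ : 0 < κ) (hu : 0 < u) :
    |deriv (fejerKernel κ) u| ≤ 4 * κ * u ^ (-2 : ℝ) := by
  calc |deriv (fejerKernel κ) u| ≤ 4 * κ * 1 / u ^ 2 :=
        (abs_deriv_fejerKernel_le hκ hu).trans (by gcongr; exact abs_sin_le_one _)
    _ = 4 * κ * u ^ (-2 : ℝ) := by
      rw [rpow_neg hu.le, rpow_two, mul_one, div_eq_mul_inv]

lemma absolutelyContinuousOnInterval_fejerKernel (κ : ℝ) {U V : ℝ} (h : 0 ∉ uIcc U V) :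
    AbsolutelyContinuousOnInterval (fejerKernel κ) U V := by
  have h_ne : ∀ x ∈ uIcc U V, x ≠ 0 := fun x hx h₀ ↦ h (h₀ ▸ hx)
  have h_smooth : ContDiffOn ℝ 1 (fun u ↦ (sin (κ * u) / u) ^ 2) (uIcc U V) :=
    (((contDiff_sin.comp (contDiff_const.mul contDiff_id)).contDiffOn).div contDiffOn_id h_ne).pow 2
  refine ContDiffOn.absolutelyContinuousOnInterval (h_smooth.congr fun x hx ↦ ?_)
  exact fejerKernel_of_ne_zero κ (h_ne x hx)

lemma fejerKernel_le_one_add_abs_rpow (κ u : ℝ) :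
    fejerKernel κ u ≤ 2 * (1 + κ ^ 2) * (1 + |u|) ^ (-2 : ℝ) := by
  have h_sin : fejerKernel κ u * u ^ 2 ≤ 1 := by
    rcases eq_or_ne u 0 with rfl | hu
    · simp
    · rw [fejerKernel_of_ne_zero κ hu, div_pow, div_mul_cancel₀ _ (pow_ne_zero 2 hu)]
      exact sin_sq_le_one _
  rw [rpow_neg (by positivity), rpow_two, ← div_eq_mul_inv, le_div_iff₀ (by positivity)]
  have h_sq : (1 + |u|) ^ 2 ≤ 2 * (1 + u ^ 2) := by
    nlinarith [sq_nonneg (1 - |u|), sq_abs u]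
  calc fejerKernel κ u * (1 + |u|) ^ 2 ≤ fejerKernel κ u * (2 * (1 + u ^ 2)) :=
        mul_le_mul_of_nonneg_left h_sq (fejerKernel_nonneg κ u)
    _ = 2 * (fejerKernel κ u + fejerKernel κ u * u ^ 2) := by ring
    _ ≤ 2 * (1 + κ ^ 2) := by linarith [fejerKernel_le_sq κ u]

end FejerKernel

/-! ### Integration against the Fejér kernel -/

lemma integral_mul_eq_sub_integral_deriv_mul_primitive {k g : ℝ → ℝ} {a U V : ℝ}
    (hk : AbsolutelyContinuousOnInterval k U V) (hg : IntervalIntegrable g volume a V)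
    (hU : U ∈ uIcc a V) :
    ∫ x in U..V, k x * g x = k V * (∫ x in a..V, g x) - k U * (∫ x in a..U, g x) -
      ∫ x in U..V, deriv k x * ∫ y in a..x, g y := by
  have h_sub : uIcc U V ⊆ uIcc a V := uIcc_subset_uIcc hU right_mem_uIcc
  have hG : AbsolutelyContinuousOnInterval (fun x ↦ ∫ y in a..x, g y) U V :=
    (hg.absolutelyContinuousOnInterval_intervalIntegral left_mem_uIcc).mono h_sub
  rw [← hk.integral_mul_deriv_eq_deriv_mul hG]
  refine intervalIntegral.integral_congr_ae ?_
  filter_upwards [hg.ae_hasDerivAt_integral] with x hx hx_mem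
  rw [(hx (h_sub (uIoc_subset_uIcc hx_mem)) a left_mem_uIcc).deriv]

section PowerBounds

variable {E : Type*} [NormedAddCommGroup E] [NormedSpace ℝ E] {h : ℝ → E} {s : Set ℝ} {a b B r : ℝ}

lemma norm_setIntegral_le_of_norm_le_rpow_Ioc (hr : -1 < r) (hb : 0 ≤ b) (hB : 0 ≤ B)
    (hs : MeasurableSet s) (hsb : s ⊆ Ioc 0 b) (h_le : ∀ x ∈ s, ‖h x‖ ≤ B * x ^ r) :
    ‖∫ x in s, h x‖ ≤ B * (b ^ (r + 1) / (r + 1)) := by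
  have h_int : IntegrableOn (fun x ↦ B * x ^ r) (Ioc 0 b) :=
    ((intervalIntegrable_iff_integrableOn_Ioc_of_le hb).1
      (intervalIntegral.intervalIntegrable_rpow' hr)).const_mul B
  calc ‖∫ x in s, h x‖ ≤ ∫ x in s, B * x ^ r :=
        norm_integral_le_of_norm_le (h_int.mono_set hsb) (ae_restrict_of_forall_mem hs h_le)
    _ ≤ ∫ x in Ioc 0 b, B * x ^ r := by
      refine setIntegral_mono_set h_int ?_ hsb.eventuallyLE
      filter_upwards [ae_restrict_mem measurableSet_Ioc] with x hx
      have := hx.1.le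
      positivity
    _ = B * (b ^ (r + 1) / (r + 1)) := by
      rw [integral_const_mul, ← intervalIntegral.integral_of_le hb, integral_rpow (.inl hr),
        zero_rpow (by linarith), sub_zero]

lemma norm_setIntegral_le_of_norm_le_rpow_Ioi (hr : r < -1) (ha : 0 < a) (hB : 0 ≤ B)
    (hs : MeasurableSet s) (hsa : s ⊆ Ioi a) (h_le : ∀ x ∈ s, ‖h x‖ ≤ B * x ^ r) :
    ‖∫ x in s, h x‖ ≤ B * (-a ^ (r + 1) / (r + 1)) := by
  have h_int : IntegrableOn (fun x ↦ B * x ^ r) (Ioi a) :=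
    (integrableOn_Ioi_rpow_of_lt hr ha).const_mul B
  calc ‖∫ x in s, h x‖ ≤ ∫ x in s, B * x ^ r :=
        norm_integral_le_of_norm_le (h_int.mono_set hsa) (ae_restrict_of_forall_mem hs h_le)
    _ ≤ ∫ x in Ioi a, B * x ^ r := by
      refine setIntegral_mono_set h_int ?_ hsa.eventuallyLE
      filter_upwards [ae_restrict_mem measurableSet_Ioi] with x hx
      have := ha.le.trans (le_of_lt hx)
      positivity
    _ = B * (-a ^ (r + 1) / (r + 1)) := by
      rw [integral_const_mul, integral_Ioi_rpow_of_lt hr ha]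

end PowerBounds

section Estimates

variable {g G : ℝ → ℝ} {κ U V c D M δ : ℝ}

lemma abs_integral_deriv_fejerKernel_mul_le_left (hκ : 0 < κ) (hU : 0 < U) (hUκ : U ≤ κ⁻¹)
    (hc1 : c < 1) (hD : 0 ≤ D) (hG : ∀ x ∈ Ioc U κ⁻¹, |G x| ≤ D * x ^ (1 - c)) :
    |∫ x in U..κ⁻¹, deriv (fejerKernel κ) x * G x| ≤ D * (4 / (1 - c)) * κ ^ (1 + c) := by
  have h_le : ∀ x ∈ Ioc U κ⁻¹,
      ‖deriv (fejerKernel κ) x * G x‖ ≤ 4 * κ ^ 2 * D * x ^ (-c) := by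
    intro x hx
    have hx0 : 0 < x := hU.trans hx.1
    calc ‖deriv (fejerKernel κ) x * G x‖ ≤ 4 * κ ^ 2 * x ^ (-1 : ℝ) * (D * x ^ (1 - c)) :=
          norm_mul_le_of_le (abs_deriv_fejerKernel_le_sq_mul_rpow hκ hx0) (hG x hx)
      _ = 4 * κ ^ 2 * D * (x ^ (-1 : ℝ) * x ^ (1 - c)) := by ring
      _ = 4 * κ ^ 2 * D * x ^ (-c) := by
        rw [← rpow_add hx0]
        ring_nf
  have h_pow : κ ^ 2 * κ⁻¹ ^ (1 - c) = κ ^ (1 + c) := by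
    rw [inv_rpow hκ.le, ← rpow_neg hκ.le, ← rpow_two, ← rpow_add hκ]
    ring_nf
  rw [intervalIntegral.integral_of_le hUκ, ← norm_eq_abs]
  calc _ ≤ 4 * κ ^ 2 * D * (κ⁻¹ ^ (-c + 1) / (-c + 1)) :=
        norm_setIntegral_le_of_norm_le_rpow_Ioc (by linarith) (by positivity) (by positivity)
          measurableSet_Ioc (Ioc_subset_Ioc_left hU.le) h_le
    _ = D * (4 / (1 - c)) * κ ^ (1 + c) := by
      rw [← h_pow, neg_add_eq_sub]
      ring

lemma abs_integral_deriv_fejerKernel_mul_le_right (hκ : 0 < κ) (hκV : κ⁻¹ ≤ V)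
    (hc0 : 0 < c) (hD : 0 ≤ D) (hG : ∀ x ∈ Ioc κ⁻¹ V, |G x| ≤ D * x ^ (1 - c)) :
    |∫ x in κ⁻¹..V, deriv (fejerKernel κ) x * G x| ≤ D * (4 / c) * κ ^ (1 + c) := by
  have h_le : ∀ x ∈ Ioc κ⁻¹ V,
      ‖deriv (fejerKernel κ) x * G x‖ ≤ 4 * κ * D * x ^ (-1 - c) := by
    intro x hx
    have hx0 : 0 < x := (inv_pos.2 hκ).trans hx.1
    calc ‖deriv (fejerKernel κ) x * G x‖ ≤ 4 * κ * x ^ (-2 : ℝ) * (D * x ^ (1 - c)) :=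
          norm_mul_le_of_le (abs_deriv_fejerKernel_le_mul_rpow hκ hx0) (hG x hx)
      _ = 4 * κ * D * (x ^ (-2 : ℝ) * x ^ (1 - c)) := by ring
      _ = 4 * κ * D * x ^ (-1 - c) := by
        rw [← rpow_add hx0]
        ring_nf
  have h_pow : κ * κ⁻¹ ^ (-c) = κ ^ (1 + c) := by
    rw [inv_rpow hκ.le, ← rpow_neg hκ.le, neg_neg, rpow_one_add' hκ.le (by positivity)]
  rw [intervalIntegral.integral_of_le hκV, ← norm_eq_abs]
  calc _ ≤ 4 * κ * D * (-κ⁻¹ ^ (-1 - c + 1) / (-1 - c + 1)) :=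
        norm_setIntegral_le_of_norm_le_rpow_Ioi (by linarith) (inv_pos.2 hκ) (by positivity)
          measurableSet_Ioc Ioc_subset_Ioi_self h_le
    _ = D * (4 / c) * κ ^ (1 + c) := by
      rw [← h_pow, show -1 - c + 1 = -c by ring, neg_div_neg_eq]
      ring

lemma abs_integral_fejerKernel_mul_le_middle (hκ : 0 < κ) (hU : 0 < U) (hUκ : U ≤ κ⁻¹)
    (hκV : κ⁻¹ ≤ V) (hc0 : 0 < c) (hc1 : c < 1) (hD : 0 ≤ D)
    (hg : IntervalIntegrable g volume 0 V)
    (hG : ∀ T ∈ Icc U V, |∫ x in (0 : ℝ)..T, g x| ≤ D * T ^ (1 - c)) :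
    |∫ x in U..V, fejerKernel κ x * g x| ≤ D * (2 + 4 / (1 - c) + 4 / c) * κ ^ (1 + c) := by
  have hUV := hUκ.trans hκV
  have hV : 0 < V := hU.trans_le hUV
  have hU_mem : U ∈ uIcc 0 V := by simpa only [uIcc_of_le hV.le] using ⟨hU.le, hUV⟩
  have hκ_mem : κ⁻¹ ∈ uIcc U V := by simpa only [uIcc_of_le hUV] using ⟨hUκ, hκV⟩
  have hk := absolutelyContinuousOnInterval_fejerKernel κ (notMem_uIcc_of_lt hU hV)
  have h_int : IntervalIntegrable
      (fun x ↦ deriv (fejerKernel κ) x * ∫ y in (0 : ℝ)..x, g y) volume U V :=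
    hk.intervalIntegrable_deriv.mul_continuousOn
      ((intervalIntegral.continuousOn_primitive_interval' hg left_mem_uIcc).mono
        (uIcc_subset_uIcc hU_mem right_mem_uIcc))
  have h_left := abs_integral_deriv_fejerKernel_mul_le_left hκ hU hUκ hc1 hD
    fun x hx ↦ hG x ⟨hx.1.le, hx.2.trans hκV⟩
  have h_right := abs_integral_deriv_fejerKernel_mul_le_right hκ hκV hc0 hD
    fun x hx ↦ hG x ⟨hUκ.trans hx.1.le, hx.2⟩
  have h_split := intervalIntegral.integral_add_adjacent_intervals
    (h_int.mono_set (uIcc_subset_uIcc left_mem_uIcc hκ_mem))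
    (h_int.mono_set (uIcc_subset_uIcc hκ_mem right_mem_uIcc))
  have h_boundary : ∀ T ∈ Icc U V,
      |fejerKernel κ T * ∫ x in (0 : ℝ)..T, g x| ≤ D * κ ^ (1 + c) :=
    fun T hT ↦ abs_fejerKernel_mul_le hκ (hU.trans_le hT.1) ⟨by linarith, hc1.le⟩ (hG T hT)
  have hU_term := h_boundary U ⟨le_rfl, hUV⟩
  have hV_term := h_boundary V ⟨hUV, le_rfl⟩
  rw [integral_mul_eq_sub_integral_deriv_mul_primitive hk hg hU_mem, ← h_split]
  rw [abs_le] at *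
  constructor <;> linarith

lemma abs_integral_fejerKernel_mul_le_head (κ : ℝ) (hU : 0 ≤ U) (hδ0 : 0 ≤ δ) (hδ : δ ≤ 1 / 2)
    (hM : 0 ≤ M) (hg : ∀ u ∈ Ioc 0 U, |g u| ≤ M * (u ^ δ + u ^ (-δ))) :
    |∫ x in (0 : ℝ)..U, fejerKernel κ x * g x| ≤
      2 * M * (κ ^ 2 * U ^ (1 + δ) + κ ^ 2 * U ^ (1 - δ)) := by
  have h_le : ∀ x ∈ Ioc 0 U,
      ‖fejerKernel κ x * g x‖ ≤ κ ^ 2 * (M * (U ^ (2 * δ) + 1)) * x ^ (-δ) := by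
    intro x hx
    have hx0 : 0 < x := hx.1
    have h_factor : x ^ δ + x ^ (-δ) ≤ (U ^ (2 * δ) + 1) * x ^ (-δ) := by
      calc x ^ δ + x ^ (-δ) = (x ^ (2 * δ) + 1) * x ^ (-δ) := by
            rw [add_one_mul, ← rpow_add hx0]
            ring_nf
        _ ≤ (U ^ (2 * δ) + 1) * x ^ (-δ) := by
          gcongr
          exact hx.2
    rw [norm_mul, norm_of_nonneg (fejerKernel_nonneg κ x), mul_assoc, mul_assoc]
    gcongr
    · exact fejerKernel_le_sq κ x
    · exact (hg x hx).trans (by gcongr)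
  have h_pow : U ^ (2 * δ) * U ^ (1 - δ) = U ^ (1 + δ) := by
    rw [← rpow_add_of_nonneg hU (by positivity) (by linarith)]
    ring_nf
  rw [intervalIntegral.integral_of_le hU, ← norm_eq_abs]
  calc _ ≤ κ ^ 2 * (M * (U ^ (2 * δ) + 1)) * (U ^ (-δ + 1) / (-δ + 1)) :=
        norm_setIntegral_le_of_norm_le_rpow_Ioc (by linarith) hU (by positivity)
          measurableSet_Ioc subset_rfl h_le
    _ ≤ κ ^ 2 * (M * (U ^ (2 * δ) + 1)) * (U ^ (1 - δ) * 2) := by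
      rw [neg_add_eq_sub]
      gcongr
      exact div_le_of_le_mul₀ (by linarith) (by positivity)
        (by nlinarith [rpow_nonneg hU (1 - δ)])
    _ = 2 * M * (κ ^ 2 * U ^ (1 + δ) + κ ^ 2 * U ^ (1 - δ)) := by
      rw [← h_pow]
      ring

lemma abs_integral_fejerKernel_mul_le_tail (κ : ℝ) (hV : 0 < V) (hδ0 : 0 ≤ δ) (hδ : δ ≤ 1 / 2)
    (hM : 0 ≤ M) (hg : ∀ u ∈ Ioi V, |g u| ≤ M * (u ^ δ + u ^ (-δ))) :
    |∫ x in Ioi V, fejerKernel κ x * g x| ≤ 2 * M * (V ^ (-1 + δ) + V ^ (-1 - δ)) := by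
  have h_le : ∀ x ∈ Ioi V,
      ‖fejerKernel κ x * g x‖ ≤ M * (1 + V ^ (-(2 * δ))) * x ^ (-2 + δ) := by
    intro x hx
    have hx0 : 0 < x := hV.trans hx
    have h_factor : x ^ δ + x ^ (-δ) ≤ (1 + V ^ (-(2 * δ))) * x ^ δ := by
      calc x ^ δ + x ^ (-δ) = (1 + x ^ (-(2 * δ))) * x ^ δ := by
            rw [one_add_mul, ← rpow_add hx0]
            ring_nf
        _ ≤ (1 + V ^ (-(2 * δ))) * x ^ δ := by
          gcongr 2
          exact rpow_le_rpow_of_nonpos hV (le_of_lt hx) (by linarith)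
    calc ‖fejerKernel κ x * g x‖ ≤ x ^ (-2 : ℝ) * (M * ((1 + V ^ (-(2 * δ))) * x ^ δ)) := by
          rw [norm_mul, norm_of_nonneg (fejerKernel_nonneg κ x)]
          gcongr
          · exact fejerKernel_le_rpow_neg_two κ hx0
          · exact (hg x hx).trans (by gcongr)
      _ = M * (1 + V ^ (-(2 * δ))) * x ^ (-2 + δ) := by
        rw [rpow_add hx0]
        ring
  have h_pow : V ^ (-(2 * δ)) * V ^ (-1 + δ) = V ^ (-1 - δ) := by
    rw [← rpow_add hV]
    ring_nf
  rw [← norm_eq_abs]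
  calc _ ≤ M * (1 + V ^ (-(2 * δ))) * (-V ^ (-2 + δ + 1) / (-2 + δ + 1)) :=
        norm_setIntegral_le_of_norm_le_rpow_Ioi (by linarith) hV (by positivity)
          measurableSet_Ioi subset_rfl h_le
    _ ≤ M * (1 + V ^ (-(2 * δ))) * (V ^ (-1 + δ) * 2) := by
      rw [show -2 + δ + 1 = -(1 - δ) by ring, neg_div_neg_eq, neg_sub, sub_eq_neg_add]
      gcongr
      exact div_le_of_le_mul₀ (by linarith) (by positivity)
        (by nlinarith [rpow_nonneg hV.le (-1 + δ)])
    _ = 2 * M * (V ^ (-1 + δ) + V ^ (-1 - δ)) := by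
      rw [← h_pow]
      ring

lemma abs_integral_Ioi_fejerKernel_mul_le (hκ : 0 < κ) (hU : 0 < U) (hUκ : U ≤ κ⁻¹)
    (hκV : κ⁻¹ ≤ V) (hc0 : 0 < c) (hc1 : c < 1) (hD : 0 ≤ D) (hδ0 : 0 ≤ δ) (hδ : δ ≤ 1 / 2)
    (hM : 0 ≤ M) (hg_le : ∀ u ∈ Ioi 0, |g u| ≤ M * (u ^ δ + u ^ (-δ)))
    (hg : IntervalIntegrable g volume 0 V)
    (hkg : IntegrableOn (fun u ↦ fejerKernel κ u * g u) (Ioi 0))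
    (hG : ∀ T ∈ Icc U V, |∫ x in (0 : ℝ)..T, g x| ≤ D * T ^ (1 - c)) :
    |∫ u in Ioi 0, fejerKernel κ u * g u| ≤
      D * (2 + 4 / (1 - c) + 4 / c) * κ ^ (1 + c) +
        2 * M * (κ ^ 2 * U ^ (1 + δ) + κ ^ 2 * U ^ (1 - δ)) +
        2 * M * (V ^ (-1 + δ) + V ^ (-1 - δ)) := by
  have hV : 0 < V := hU.trans_le (hUκ.trans hκV)
  have hkgU := hkg.mono_set (Ioi_subset_Ioi hU.le)
  have hkgV := hkg.mono_set (Ioi_subset_Ioi hV.le)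
  have h_head := abs_integral_fejerKernel_mul_le_head κ hU.le hδ0 hδ hM
    fun u hu ↦ hg_le u hu.1
  have h_middle := abs_integral_fejerKernel_mul_le_middle hκ hU hUκ hκV hc0 hc1 hD hg hG
  have h_tail := abs_integral_fejerKernel_mul_le_tail κ hV hδ0 hδ hM
    fun u hu ↦ hg_le u (hV.trans hu)
  rw [← intervalIntegral.integral_interval_add_Ioi hkg hkgU,
    ← intervalIntegral.integral_interval_add_Ioi hkgU hkgV]
  rw [abs_le] at *
  constructor <;> linarith

end Estimates

/-! ### Folding onto the half-line -/

section Fold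

variable {E : Type*} [NormedAddCommGroup E] [NormedSpace ℝ E] {f : ℝ → E}

lemma integral_eq_integral_Ioi_add_comp_neg (hf : Integrable f) :
    ∫ x, f x = ∫ x in Ioi 0, (f x + f (-x)) := by
  rw [integral_add hf.integrableOn hf.comp_neg.integrableOn, integral_comp_neg_Ioi, neg_zero,
    add_comm, intervalIntegral.integral_Iic_add_Ioi hf.integrableOn hf.integrableOn]

lemma intervalIntegral_add_comp_neg {T : ℝ} (hf : IntervalIntegrable f volume (-T) T) :
    IntervalIntegrable (fun u ↦ f u + f (-u)) volume 0 T ∧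
      ∫ u in (0 : ℝ)..T, (f u + f (-u)) = ∫ t in (-T)..T, f t := by
  have h_zero : 0 ∈ uIcc (-T) T := by
    rcases le_total 0 T with hT | hT <;> simp [hT]
  have h_neg : IntervalIntegrable f volume (-T) 0 :=
    hf.mono_set (uIcc_subset_uIcc left_mem_uIcc h_zero)
  have h_pos : IntervalIntegrable f volume 0 T :=
    hf.mono_set (uIcc_subset_uIcc h_zero right_mem_uIcc)
  have h_comp : IntervalIntegrable (fun u ↦ f (-u)) volume 0 T := by
    simpa using ((IntervalIntegrable.iff_comp_neg (f := f)).1 h_neg).symm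
  refine ⟨h_pos.add h_comp, ?_⟩
  rw [intervalIntegral.integral_add h_pos h_comp, intervalIntegral.integral_comp_neg, neg_zero,
    add_comm, intervalIntegral.integral_add_adjacent_intervals h_neg h_pos]

end Fold

section Growth

variable {x δ : ℝ}

lemma abs_log_le_rpow_add_rpow_neg (hx : 0 < x) (hδ : 0 < δ) :
    |log x| ≤ (x ^ δ + x ^ (-δ)) / δ := by
  have h_upper := log_le_rpow_div hx.le hδ
  have h_lower := log_le_rpow_div (inv_pos.2 hx).le hδ
  rw [log_inv, inv_rpow hx.le, ← rpow_neg hx.le] at h_lower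
  have h_pos : 0 < x ^ δ / δ := by positivity
  have h_neg : 0 < x ^ (-δ) / δ := by positivity
  rw [add_div, abs_le]
  constructor <;> linarith

lemma one_le_rpow_add_rpow_neg (hx : 0 < x) (δ : ℝ) : 1 ≤ x ^ δ + x ^ (-δ) := by
  have h_pos : 0 < x ^ δ := by positivity
  have h_prod : x ^ δ * x ^ (-δ) = 1 := by rw [← rpow_add hx, add_neg_cancel, rpow_zero]
  nlinarith [sq_nonneg (x ^ δ - x ^ (-δ)), rpow_pos_of_pos hx (-δ)]

lemma one_add_rpow_le_two_mul (hx : 0 < x) (hδ0 : 0 ≤ δ) (hδ1 : δ ≤ 1) :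
    (1 + x) ^ δ ≤ 2 * (x ^ δ + x ^ (-δ)) := by
  have h_sub := rpow_add_le_add_rpow zero_le_one hx.le hδ0 hδ1
  rw [one_rpow] at h_sub
  linarith [one_le_rpow_add_rpow_neg hx δ, rpow_pos_of_pos hx (-δ)]

end Growth

/-- The deviation of the folded function `f u + f (-u)` from `log u + (A + 1)`, the derivative of
the model `T ↦ T * (log T + A)` for `∫ t in -T..T, f t`. -/
noncomputable def symmetrizedError (f : ℝ → ℝ) (A u : ℝ) : ℝ := f u + f (-u) - (log u + (A + 1))

section SymmetrizedError

variable {f : ℝ → ℝ} {A K T δ κ : ℝ}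

lemma abs_symmetrizedError_le (hδ0 : 0 < δ) (hδ1 : δ ≤ 1) (hf : ∀ t, |f t| ≤ K * (1 + |t|) ^ δ)
    {u : ℝ} (hu : 0 < u) :
    |symmetrizedError f A u| ≤ (4 * K + 1 / δ + |A + 1|) * (u ^ δ + u ^ (-δ)) := by
  have hK : 0 ≤ K := by simpa using (abs_nonneg _).trans (hf 0)
  have hf_le : ∀ t, |t| = u → |f t| ≤ 2 * K * (u ^ δ + u ^ (-δ)) := by
    intro t ht
    calc |f t| ≤ K * (1 + u) ^ δ := ht ▸ hf t
      _ ≤ K * (2 * (u ^ δ + u ^ (-δ))) := by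
        gcongr
        exact one_add_rpow_le_two_mul hu hδ0.le hδ1
      _ = 2 * K * (u ^ δ + u ^ (-δ)) := by ring
  have h_const : |A + 1| ≤ |A + 1| * (u ^ δ + u ^ (-δ)) :=
    le_mul_of_one_le_right (abs_nonneg _) (one_le_rpow_add_rpow_neg hu δ)
  calc |symmetrizedError f A u| ≤ |f u| + |f (-u)| + (|log u| + |A + 1|) :=
        (abs_sub _ _).trans (add_le_add (abs_add_le _ _) (abs_add_le _ _))
    _ ≤ 2 * K * (u ^ δ + u ^ (-δ)) + 2 * K * (u ^ δ + u ^ (-δ)) +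
        ((u ^ δ + u ^ (-δ)) / δ + |A + 1| * (u ^ δ + u ^ (-δ))) := by
      gcongr
      · exact hf_le u (abs_of_pos hu)
      · exact hf_le (-u) (by rw [abs_neg, abs_of_pos hu])
      · exact abs_log_le_rpow_add_rpow_neg hu hδ0
    _ = (4 * K + 1 / δ + |A + 1|) * (u ^ δ + u ^ (-δ)) := by ring

lemma intervalIntegrable_log_add_const (a T : ℝ) :
    IntervalIntegrable (fun u ↦ log u + a) volume 0 T :=
  intervalIntegral.intervalIntegrable_log'.add intervalIntegrable_const

lemma intervalIntegrable_symmetrizedError (hf : IntervalIntegrable f volume (-T) T) :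
    IntervalIntegrable (symmetrizedError f A) volume 0 T :=
  (intervalIntegral_add_comp_neg hf).1.sub (intervalIntegrable_log_add_const (A + 1) T)

lemma integral_symmetrizedError (hf : IntervalIntegrable f volume (-T) T) :
    ∫ u in (0 : ℝ)..T, symmetrizedError f A u = (∫ t in (-T)..T, f t) - T * (log T + A) := by
  obtain ⟨h_fold_int, h_fold⟩ := intervalIntegral_add_comp_neg hf
  simp only [symmetrizedError]
  rw [intervalIntegral.integral_sub h_fold_int (intervalIntegrable_log_add_const (A + 1) T),
    h_fold, intervalIntegral.integral_add intervalIntegral.intervalIntegrable_log'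
      intervalIntegrable_const, integral_log, intervalIntegral.integral_const, smul_eq_mul]
  ring

lemma intervalIntegrable_of_abs_le_one_add_abs_rpow (hf_meas : AEStronglyMeasurable f)
    (hf : ∀ t, |f t| ≤ K * (1 + |t|) ^ δ) (a b : ℝ) : IntervalIntegrable f volume a b := by
  have h_cont : Continuous fun t : ℝ ↦ K * (1 + |t|) ^ δ :=
    continuous_const.mul ((by fun_prop : Continuous fun t : ℝ ↦ 1 + |t|).rpow_const
      fun t ↦ .inl (by positivity))
  exact (h_cont.intervalIntegrable a b).mono_fun' hf_meas.restrict (.of_forall hf)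

lemma integrable_fejerKernel_mul (κ : ℝ) (hf_meas : AEStronglyMeasurable f) (hδ : δ < 1)
    (hf : ∀ t, |f t| ≤ K * (1 + |t|) ^ δ) : Integrable fun u ↦ fejerKernel κ u * f u := by
  have h_major : Integrable fun u : ℝ ↦ (1 + ‖u‖) ^ (-(2 - δ)) :=
    integrable_one_add_norm (by rw [Module.finrank_self, Nat.cast_one]; linarith)
  refine (h_major.const_mul (2 * (1 + κ ^ 2) * K)).mono'
    ((continuous_fejerKernel κ).aestronglyMeasurable.mul hf_meas) (.of_forall fun u ↦ ?_)
  calc ‖fejerKernel κ u * f u‖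
      ≤ 2 * (1 + κ ^ 2) * (1 + |u|) ^ (-2 : ℝ) * (K * (1 + |u|) ^ δ) :=
        norm_mul_le_of_le ((norm_of_nonneg (fejerKernel_nonneg κ u)).trans_le
          (fejerKernel_le_one_add_abs_rpow κ u)) (hf u)
    _ = 2 * (1 + κ ^ 2) * K * ((1 + |u|) ^ (-2 : ℝ) * (1 + |u|) ^ δ) := by ring
    _ = 2 * (1 + κ ^ 2) * K * (1 + ‖u‖) ^ (-(2 - δ)) := by
      rw [← rpow_add (by positivity), norm_eq_abs]
      ring_nf

lemma integral_fejerKernel_mul_eq (hκ : 0 < κ)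
    (hf : Integrable fun u ↦ fejerKernel κ u * f u) (A : ℝ) :
    IntegrableOn (fun u ↦ fejerKernel κ u * symmetrizedError f A u) (Ioi 0) ∧
      ∫ u, fejerKernel κ u * f u =
        (∫ u in Ioi 0, fejerKernel κ u * symmetrizedError f A u) +
          π / 2 * κ * (log (1 / κ) + (A + 2 - eulerMascheroniConstant - log 2)) := by
  obtain ⟨h_model_int, h_model⟩ := integral_fejerKernel_mul_log_add_Ioi hκ (A + 1)
  have h_fold_int : IntegrableOn
      (fun u ↦ fejerKernel κ u * f u + fejerKernel κ (-u) * f (-u)) (Ioi 0) :=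
    (hf.add hf.comp_neg).integrableOn
  have h_rw (u : ℝ) : fejerKernel κ u * symmetrizedError f A u =
      fejerKernel κ u * f u + fejerKernel κ (-u) * f (-u) -
        fejerKernel κ u * (log u + (A + 1)) := by
    rw [fejerKernel_neg, symmetrizedError]
    ring
  simp_rw [h_rw]
  refine ⟨h_fold_int.sub h_model_int, ?_⟩
  rw [integral_sub h_fold_int h_model_int, h_model, integral_eq_integral_Ioi_add_comp_neg hf]
  ring

end SymmetrizedError

section Scales

variable {κ δ ε η : ℝ}

lemma rpow_rpow_le_rpow {a b d : ℝ} (hκ0 : 0 < κ) (hκ1 : κ ≤ 1) (h : d ≤ a * b) :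
    (κ ^ a) ^ b ≤ κ ^ d := by
  rw [← rpow_mul hκ0.le]
  exact rpow_le_rpow_of_exponent_ge hκ0 hκ1 h

lemma sq_mul_rpow_rpow_le (hκ0 : 0 < κ) (hκ1 : κ ≤ 1) (hδ : (1 - η) * δ ≤ ε) :
    κ ^ 2 * (κ ^ (-(1 - η))) ^ (1 + δ) ≤ κ ^ (1 + η - ε) := by
  calc κ ^ 2 * (κ ^ (-(1 - η))) ^ (1 + δ) ≤ κ ^ 2 * κ ^ (η - 1 - ε) := by
        gcongr
        exact rpow_rpow_le_rpow hκ0 hκ1 (by linarith)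
    _ = κ ^ (1 + η - ε) := by
      rw [← rpow_two, ← rpow_add hκ0]
      ring_nf

lemma rpow_rpow_neg_one_add_le (hκ0 : 0 < κ) (hκ1 : κ ≤ 1) (hδ : (1 + η) * δ ≤ ε) :
    (κ ^ (-(1 + η))) ^ (-1 + δ) ≤ κ ^ (1 + η - ε) :=
  rpow_rpow_le_rpow hκ0 hκ1 (by linarith)

end Scales

section Variance

variable {f : ℝ → ℝ} {c c₁ c₂ A D K δ ε κ : ℝ}

lemma abs_integral_fejerKernel_mul_symmetrizedError_le (hc0 : 0 < c) (hc1 : c < 1)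
    (hc₁ : 0 ≤ c₁) (hc₂ : 0 ≤ c₂) (hD : 0 ≤ D) (hf_meas : AEStronglyMeasurable f)
    (hδ0 : 0 < δ) (hδ : δ ≤ 1 / 2) (hδε : (1 + c₁ + c₂) * δ ≤ ε)
    (hf : ∀ t, |f t| ≤ K * (1 + |t|) ^ δ) (hκ0 : 0 < κ) (hκ1 : κ ≤ 1)
    (h_mean : ∀ T, κ ^ (-(1 - c₁)) ≤ T → T ≤ κ ^ (-(1 + c₂)) →
      |(∫ t in (-T)..T, f t) - T * (log T + A)| ≤ D * T ^ (1 - c)) :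
    |∫ u in Ioi 0, fejerKernel κ u * symmetrizedError f A u| ≤
      D * (2 + 4 / (1 - c) + 4 / c) * κ ^ (1 + c) +
        4 * (4 * K + 1 / δ + |A + 1|) * (κ ^ (1 + c₁ - ε) + κ ^ (1 + c₂ - ε)) := by
  set M := 4 * K + 1 / δ + |A + 1|
  have hK : 0 ≤ K := by simpa using (abs_nonneg _).trans (hf 0)
  have hM : 0 ≤ M := by positivity
  have hf_int (T : ℝ) := intervalIntegrable_of_abs_le_one_add_abs_rpow hf_meas hf (-T) T
  have hUκ : κ ^ (-(1 - c₁)) ≤ κ⁻¹ := by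
    rw [← rpow_neg_one]
    exact rpow_le_rpow_of_exponent_ge hκ0 hκ1 (by linarith)
  have hκV : κ⁻¹ ≤ κ ^ (-(1 + c₂)) := by
    rw [← rpow_neg_one]
    exact rpow_le_rpow_of_exponent_ge hκ0 hκ1 (by linarith)
  have h_bound := abs_integral_Ioi_fejerKernel_mul_le hκ0 (by positivity) hUκ hκV hc0 hc1 hD
    hδ0.le hδ hM (fun u hu ↦ abs_symmetrizedError_le hδ0 (by linarith) hf hu)
    (intervalIntegrable_symmetrizedError (hf_int _))
    (integral_fejerKernel_mul_eq hκ0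
      (integrable_fejerKernel_mul κ hf_meas (by linarith) hf) A).1
    fun T hT ↦ by simpa only [integral_symmetrizedError (hf_int T)] using h_mean T hT.1 hT.2
  have hc₁δ : 0 ≤ c₁ * δ := by positivity
  have hc₂δ : 0 ≤ c₂ * δ := by positivity
  refine h_bound.trans ?_
  rw [sub_eq_add_neg 1 δ, sub_eq_add_neg (-1) δ]
  calc _ ≤ D * (2 + 4 / (1 - c) + 4 / c) * κ ^ (1 + c) +
        2 * M * (κ ^ (1 + c₁ - ε) + κ ^ (1 + c₁ - ε)) +
        2 * M * (κ ^ (1 + c₂ - ε) + κ ^ (1 + c₂ - ε)) := by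
        gcongr <;> first
          | exact sq_mul_rpow_rpow_le hκ0 hκ1 (by linarith)
          | exact rpow_rpow_neg_one_add_le hκ0 hκ1 (by linarith)
    _ = _ := by ring

theorem variance_lemma_lot_general (A : ℝ) (hc0 : 0 < c) (hc1 : c < 1) (hc₁ : 0 ≤ c₁)
    (hc₂ : 0 ≤ c₂) (hD : 0 ≤ D) (hf_meas : AEStronglyMeasurable f)
    (hf : ∀ ε : ℝ, 0 < ε → ∃ K, ∀ t, |f t| ≤ K * (1 + |t|) ^ ε) (hε : 0 < ε) :
    ∃ C, 0 < C ∧ ∀ κ, 0 < κ → κ ≤ 1 →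
      (∀ T, κ ^ (-(1 - c₁)) ≤ T → T ≤ κ ^ (-(1 + c₂)) →
        |(∫ t in (-T)..T, f t) - T * (log T + A)| ≤ D * T ^ (1 - c)) →
      |(∫ u, fejerKernel κ u * f u) -
          π / 2 * κ * (log (1 / κ) + (A + 2 - eulerMascheroniConstant - log 2))|
        ≤ C * (κ ^ (1 + c) + κ ^ (1 + c₁ - ε) + κ ^ (1 + c₂ - ε)) := by
  obtain ⟨δ, hδ0, hδ, hδε⟩ : ∃ δ : ℝ, 0 < δ ∧ δ ≤ 1 / 2 ∧ (1 + c₁ + c₂) * δ ≤ ε :=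
    ⟨min (1 / 2) (ε / (1 + c₁ + c₂)), lt_min one_half_pos (by positivity), min_le_left _ _,
      (le_div_iff₀' (by positivity)).1 (min_le_right _ _)⟩
  obtain ⟨K, hK⟩ := hf δ hδ0
  have hK0 : 0 ≤ K := by simpa using (abs_nonneg _).trans (hK 0)
  have : 0 < 1 - c := sub_pos.2 hc1
  set P := D * (2 + 4 / (1 - c) + 4 / c)
  set Q := 4 * (4 * K + 1 / δ + |A + 1|)
  have hP : 0 ≤ P := by positivity
  have hQ : 0 < Q := by positivity
  refine ⟨P + Q, by positivity, fun κ hκ0 hκ1 h_mean ↦ ?_⟩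
  rw [(integral_fejerKernel_mul_eq hκ0
    (integrable_fejerKernel_mul κ hf_meas (by linarith) hK) A).2, add_sub_cancel_right]
  calc _ ≤ P * κ ^ (1 + c) + Q * (κ ^ (1 + c₁ - ε) + κ ^ (1 + c₂ - ε)) :=
        abs_integral_fejerKernel_mul_symmetrizedError_le hc0 hc1 hc₁ hc₂ hD hf_meas hδ0 hδ hδε
          hK hκ0 hκ1 h_mean
    _ ≤ (P + Q) * κ ^ (1 + c) + (P + Q) * (κ ^ (1 + c₁ - ε) + κ ^ (1 + c₂ - ε)) := by
      gcongr <;> linarith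
    _ = _ := by ring

end Variance

/-- **Lemma 1 (Goldston–Montgomery type).** If `∫_{-T}^{T} f = T(log T + A) + O(T^{1-c})`
uniformly for `κ^{-(1-c₁)} ≤ T ≤ κ^{-(1+c₂)}`, then
`∫ (sin κu / u)² f(u) du = (π/2) κ (log(1/κ) + B) + O(κ^{1+c} + κ^{1+c₁-ε} + κ^{1+c₂-ε})`,
where `B = A + 2 - γ₀ - log 2`. -/
theorem variance_lemma_lot
    (c c₁ c₂ A D : ℝ) (hc0 : 0 < c) (hc1 : c < 1) (hc₁0 : 0 < c₁) (hc₁1 : c₁ < 1)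
    (hc₂0 : 0 < c₂) (hc₂1 : c₂ < 1) (hD : 0 < D)
    (f : ℝ → ℝ) (hmeas : Measurable f) (hnn : ∀ t, 0 ≤ f t)
    (hgrow : ∀ ε : ℝ, 0 < ε → ∃ Cε : ℝ, ∀ t : ℝ, f t ≤ Cε * (1 + |t|) ^ ε) :
    ∀ ε : ℝ, 0 < ε → ∃ C : ℝ, 0 < C ∧ ∃ κ₀ : ℝ, 0 < κ₀ ∧ κ₀ < 1 ∧
      ∀ κ : ℝ, 0 < κ → κ < κ₀ →
        (∀ T : ℝ, κ ^ (-(1 - c₁)) ≤ T → T ≤ κ ^ (-(1 + c₂)) →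
          |(∫ t in (-T)..T, f t) - T * (Real.log T + A)| ≤ D * T ^ (1 - c)) →
        |(∫ u : ℝ, (if u = 0 then κ ^ 2 else (Real.sin (κ * u) / u) ^ 2) * f u) -
            π / 2 * κ * (Real.log (1 / κ) +
              (A + 2 - Real.eulerMascheroniConstant - Real.log 2))|
          ≤ C * (κ ^ (1 + c) + κ ^ (1 + c₁ - ε) + κ ^ (1 + c₂ - ε)) := by
  intro ε hε
  obtain ⟨C, hC, h_bound⟩ := variance_lemma_lot_general A hc0 hc1 hc₁0.le hc₂0.le hD.le
    hmeas.aestronglyMeasurable (by simpa only [abs_of_nonneg (hnn _)] using hgrow) hε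
  simp_rw [← fejerKernel_eq_ite]
  exact ⟨C, hC, 1 / 2, by norm_num, by norm_num,
    fun κ hκ0 hκ ↦ h_bound κ hκ0 (hκ.le.trans (by norm_num))⟩
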